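/- arXiv:2511.13933 — 3 statements merged into one kernel-verified Lean document; each statement's English description precedes it below -/
import Mathlib

section
/- Let J be a 5×5 real positive definite matrix and let U denote its top-left 3×3 block. Then the trace of the top-left 3×3 block of J⁻¹ satisfies tr([J⁻¹]_{1:3,1:3}) ≥ 9 / tr(U). -/
/-!
For positive definite `A` and any `B`, the matrix
`(A B - 1)ᴴ A⁻¹ (A B - 1) = Bᴴ A B - Bᴴ - B + A⁻¹` is positive semidefinite. Taking `B = t • 1` with
`t` self-adjoint and reading off diagonal entries bounds each `(A⁻¹)ᵢᵢ` below by `2 t - t² Aᵢᵢ`.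
Summing over `k` indices, with `T` the sum of the corresponding `Aᵢᵢ`, gives the lower bound
`2 k t - t² T`, whose maximum, at `t = k / T`, is `k² / T`.
-/

section

variable {n K : Type*} [Fintype n] [DecidableEq n]
  [Field K] [PartialOrder K] [StarRing K] {A : Matrix n n K}

open Matrix in
lemma posSemidef_conjTranspose_mul_mul_sub_sub_add_inv (hA : A.PosDef) (B : Matrix n n K) :
    (Bᴴ * A * B - Bᴴ - B + A⁻¹).PosSemidef := by
  have hdet : IsUnit A.det := A.isUnit_iff_isUnit_det.mp hA.isUnit
  have hsquare : (A * B - 1)ᴴ * A⁻¹ * (A * B - 1) = Bᴴ * A * B - Bᴴ - B + A⁻¹ := by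
    have hleft : (A * B - 1)ᴴ * A⁻¹ = Bᴴ - A⁻¹ := by
      rw [conjTranspose_sub, conjTranspose_mul, hA.isHermitian.eq, conjTranspose_one, sub_mul,
        mul_nonsing_inv_cancel_right _ _ hdet, one_mul]
    rw [hleft, sub_mul, mul_sub, mul_sub, nonsing_inv_mul_cancel_left _ _ hdet, mul_one, mul_one,
      ← mul_assoc]
    abel
  exact hsquare ▸ hA.inv.posSemidef.conjTranspose_mul_mul_same (A * B - 1)

variable [IsOrderedAddMonoid K]

lemma two_mul_sub_sq_mul_diag_le_diag_inv (hA : A.PosDef) {t : K} (ht : IsSelfAdjoint t) (i : n) :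
    2 * t - t ^ 2 * A i i ≤ A⁻¹ i i := by
  have hdiag : 0 ≤ t * (t * A i i) - t - t + A⁻¹ i i := by
    simpa [ht.star_eq] using
      (posSemidef_conjTranspose_mul_mul_sub_sub_add_inv hA (t • 1)).diag_nonneg (i := i)
  rw [← sub_nonneg]
  convert hdiag using 1
  ring

theorem bcrb_trace_lower_bound_general {ι : Type*} [Fintype ι] [Nonempty ι] (hA : A.PosDef)
    (f : ι → n) :
    (Fintype.card ι : K) ^ 2 / ∑ i, A (f i) (f i) ≤ ∑ i, A⁻¹ (f i) (f i) := by
  set k := (Fintype.card ι : K)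
  set T := ∑ i, A (f i) (f i)
  have hT : T ≠ 0 := (Finset.sum_pos (fun _ _ => hA.diag_pos) Finset.univ_nonempty).ne'
  have hT_star : IsSelfAdjoint T := isSelfAdjoint_sum _ fun i _ => hA.isHermitian.apply (f i) (f i)
  have ht : IsSelfAdjoint (k / T) := (IsSelfAdjoint.natCast _).div hT_star
  calc k ^ 2 / T
      = k * (2 * (k / T)) - (k / T) ^ 2 * T := by
        field_simp
        ring
    _ = ∑ i, (2 * (k / T) - (k / T) ^ 2 * A (f i) (f i)) := by
        rw [Finset.sum_sub_distrib, Finset.sum_const, Finset.card_univ, nsmul_eq_mul,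
          ← Finset.mul_sum]
    _ ≤ ∑ i, A⁻¹ (f i) (f i) :=
        Finset.sum_le_sum fun i _ => two_mul_sub_sq_mul_diag_le_diag_inv hA ht (f i)

end

/-- **Lemma 1 (paper).** For a 5×5 real positive definite matrix `J` with top-left
3×3 block `U`, the trace of the top-left 3×3 block of `J⁻¹` is at least `9 / tr U`. -/
theorem bcrb_trace_lower_bound (J : Matrix (Fin 5) (Fin 5) ℝ) (hJ : J.PosDef) :
    9 / (∑ i : Fin 3, J (Fin.castLE (by norm_num) i) (Fin.castLE (by norm_num) i)) ≤
      ∑ i : Fin 3, J⁻¹ (Fin.castLE (by norm_num) i) (Fin.castLE (by norm_num) i) := by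
  have hcard : (Fintype.card (Fin 3) : ℝ) ^ 2 = 9 := by norm_num
  rw [← hcard]
  exact bcrb_trace_lower_bound_general hJ (Fin.castLE (by norm_num))
end

section
/- (Optimality of the bisection solution in the active-constraint case.) Let A be an N×N complex Hermitian matrix, R an N×N complex positive semidefinite Hermitian matrix, μ ≥ 0, δ > 0, ε ≥ 0. Let λ = λ_max(A − μR) ≥ 0 and let v ∈ ℂᴺ be a unit-norm eigenvector of A − μR for the eigenvalue λ such that Re(vᴴ R v) = ε/δ. Then f̂ = √δ · v satisfies Re(f̂ᴴ R f̂) = ε, ‖f̂‖² = δ, and Re(f̂ᴴ A f̂) = δλ + με; consequently, by the weak-duality bound, f̂ maximizes Re(fᴴ A f) over all f with Re(fᴴ R f) ≤ ε and ‖f‖² ≤ δ. -/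
open Matrix
open scoped ComplexOrder

/-!
With `λ = λ_max(A - μR)`, every feasible `f` satisfies
`Re (fᴴ A f) = Re (fᴴ (A - μR) f) + μ Re (fᴴ R f) ≤ λ ‖f‖² + με ≤ λδ + με`, and equality holds
throughout for a `λ`-eigenvector of `A - μR` that saturates both constraints. The vector `√δ • v`
is such an eigenvector.
-/

section QuadraticForm

variable {𝕜 n : Type*} [RCLike 𝕜] [Fintype n]

lemma re_star_dotProduct_self (f : n → 𝕜) :
    RCLike.re (star f ⬝ᵥ f) = ∑ k, ‖f k‖ ^ 2 := by
  simp only [dotProduct, Pi.star_apply, RCLike.star_def, RCLike.conj_mul, map_sum,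
    ← RCLike.ofReal_pow, RCLike.ofReal_re]

lemma sum_norm_sq_smul (c : 𝕜) (f : n → 𝕜) :
    ∑ k, ‖(c • f) k‖ ^ 2 = ‖c‖ ^ 2 * ∑ k, ‖f k‖ ^ 2 := by
  simp only [Pi.smul_apply, norm_smul, mul_pow, Finset.mul_sum]

lemma re_star_smul_dotProduct_mulVec_smul (M : Matrix n n 𝕜) (c : 𝕜) (f : n → 𝕜) :
    RCLike.re (star (c • f) ⬝ᵥ (M *ᵥ (c • f))) =
      ‖c‖ ^ 2 * RCLike.re (star f ⬝ᵥ (M *ᵥ f)) := by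
  rw [star_smul, mulVec_smul, smul_dotProduct, dotProduct_smul, smul_smul, RCLike.star_def,
    RCLike.conj_mul, ← RCLike.ofReal_pow, smul_eq_mul, RCLike.re_ofReal_mul]

lemma re_star_dotProduct_sub_smul_mulVec (A R : Matrix n n 𝕜) (μ : ℝ) (f : n → 𝕜) :
    RCLike.re (star f ⬝ᵥ ((A - (μ : 𝕜) • R) *ᵥ f)) =
      RCLike.re (star f ⬝ᵥ (A *ᵥ f)) - μ * RCLike.re (star f ⬝ᵥ (R *ᵥ f)) := by
  rw [sub_mulVec, smul_mulVec, dotProduct_sub, dotProduct_smul, smul_eq_mul, map_sub,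
    RCLike.re_ofReal_mul]

lemma re_star_dotProduct_mulVec_of_eigenvector {M : Matrix n n 𝕜} {c : ℝ} {v : n → 𝕜}
    (hv : M *ᵥ v = (c : 𝕜) • v) :
    RCLike.re (star v ⬝ᵥ (M *ᵥ v)) = c * ∑ k, ‖v k‖ ^ 2 := by
  rw [hv, dotProduct_smul, smul_eq_mul, RCLike.re_ofReal_mul, re_star_dotProduct_self]

end QuadraticForm

section RayleighBound

variable {𝕜 n : Type*} [RCLike 𝕜] [Fintype n] [DecidableEq n]

open scoped MatrixOrder in
lemma posSemidef_iSup_eigenvalues_smul_one_sub {M : Matrix n n 𝕜} (hM : M.IsHermitian) :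
    (((⨆ i, hM.eigenvalues i : ℝ) : 𝕜) • 1 - M).PosSemidef := by
  have hspec : ∀ x ∈ spectrum ℝ M, x ≤ ⨆ i, hM.eigenvalues i := by
    rw [hM.spectrum_real_eq_range_eigenvalues, Set.forall_mem_range]
    exact le_ciSup (Set.finite_range _).bddAbove
  have hle : M ≤ algebraMap ℝ (Matrix n n 𝕜) (⨆ i, hM.eigenvalues i) :=
    le_algebraMap_of_spectrum_le hspec hM.isSelfAdjoint
  rwa [IsScalarTower.algebraMap_apply ℝ 𝕜, Algebra.algebraMap_eq_smul_one] at hle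

lemma re_star_dotProduct_mulVec_le_iSup_eigenvalues {M : Matrix n n 𝕜} (hM : M.IsHermitian)
    (f : n → 𝕜) :
    RCLike.re (star f ⬝ᵥ (M *ᵥ f)) ≤ (⨆ i, hM.eigenvalues i) * ∑ k, ‖f k‖ ^ 2 := by
  have h := (posSemidef_iSup_eigenvalues_smul_one_sub hM).re_dotProduct_nonneg f
  rwa [sub_mulVec, smul_mulVec, one_mulVec, dotProduct_sub, dotProduct_smul, smul_eq_mul, map_sub,
    RCLike.re_ofReal_mul, re_star_dotProduct_self, sub_nonneg] at h

lemma re_star_dotProduct_mulVec_le_of_feasible {A R : Matrix n n 𝕜} {μ δ ε : ℝ} (hμ : 0 ≤ μ)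
    (hAR : (A - (μ : 𝕜) • R).IsHermitian) (hlam : 0 ≤ ⨆ i, hAR.eigenvalues i) {f : n → 𝕜}
    (hfR : RCLike.re (star f ⬝ᵥ (R *ᵥ f)) ≤ ε) (hf : ∑ k, ‖f k‖ ^ 2 ≤ δ) :
    RCLike.re (star f ⬝ᵥ (A *ᵥ f)) ≤ δ * (⨆ i, hAR.eigenvalues i) + μ * ε :=
  calc RCLike.re (star f ⬝ᵥ (A *ᵥ f))
      = RCLike.re (star f ⬝ᵥ ((A - (μ : 𝕜) • R) *ᵥ f)) +
          μ * RCLike.re (star f ⬝ᵥ (R *ᵥ f)) := by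
        rw [re_star_dotProduct_sub_smul_mulVec, sub_add_cancel]
    _ ≤ (⨆ i, hAR.eigenvalues i) * ∑ k, ‖f k‖ ^ 2 + μ * RCLike.re (star f ⬝ᵥ (R *ᵥ f)) := by
        gcongr
        exact re_star_dotProduct_mulVec_le_iSup_eigenvalues hAR f
    _ ≤ (⨆ i, hAR.eigenvalues i) * δ + μ * ε := by gcongr
    _ = δ * (⨆ i, hAR.eigenvalues i) + μ * ε := by rw [mul_comm δ]

end RayleighBound

theorem bisection_solution_optimal_general {𝕜 n : Type*} [RCLike 𝕜] [Fintype n] [DecidableEq n]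
    (A R : Matrix n n 𝕜) (μ δ ε : ℝ) (hμ : 0 ≤ μ) (hδ : 0 < δ)
    (hAR : (A - (μ : 𝕜) • R).IsHermitian) (hlam : 0 ≤ ⨆ i, hAR.eigenvalues i) (v : n → 𝕜)
    (hv_eig : (A - (μ : 𝕜) • R) *ᵥ v = ((⨆ i, hAR.eigenvalues i : ℝ) : 𝕜) • v)
    (hv_norm : ∑ k, ‖v k‖ ^ 2 = 1) (hroot : RCLike.re (star v ⬝ᵥ (R *ᵥ v)) = ε / δ) :
    RCLike.re (star ((√δ : 𝕜) • v) ⬝ᵥ (R *ᵥ ((√δ : 𝕜) • v))) = ε ∧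
    ∑ k, ‖((√δ : 𝕜) • v) k‖ ^ 2 = δ ∧
    RCLike.re (star ((√δ : 𝕜) • v) ⬝ᵥ (A *ᵥ ((√δ : 𝕜) • v))) =
      δ * (⨆ i, hAR.eigenvalues i) + μ * ε ∧
    ∀ f : n → 𝕜, RCLike.re (star f ⬝ᵥ (R *ᵥ f)) ≤ ε → ∑ k, ‖f k‖ ^ 2 ≤ δ →
      RCLike.re (star f ⬝ᵥ (A *ᵥ f)) ≤
        RCLike.re (star ((√δ : 𝕜) • v) ⬝ᵥ (A *ᵥ ((√δ : 𝕜) • v))) := by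
  have hsqrt : ‖(√δ : 𝕜)‖ ^ 2 = δ := by
    rw [RCLike.norm_ofReal, sq_abs, Real.sq_sqrt hδ.le]
  have hAv : RCLike.re (star v ⬝ᵥ (A *ᵥ v)) = (⨆ i, hAR.eigenvalues i) + μ * (ε / δ) := by
    rw [← sub_eq_iff_eq_add, ← hroot, ← re_star_dotProduct_sub_smul_mulVec,
      re_star_dotProduct_mulVec_of_eigenvector hv_eig, hv_norm, mul_one]
  have hvalue : RCLike.re (star ((√δ : 𝕜) • v) ⬝ᵥ (A *ᵥ ((√δ : 𝕜) • v))) =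
      δ * (⨆ i, hAR.eigenvalues i) + μ * ε := by
    rw [re_star_smul_dotProduct_mulVec_smul, hsqrt, hAv, mul_add, mul_left_comm,
      mul_div_cancel₀ _ hδ.ne']
  refine ⟨?_, ?_, hvalue, fun f hfR hf =>
    hvalue ▸ re_star_dotProduct_mulVec_le_of_feasible hμ hAR hlam hfR hf⟩
  · rw [re_star_smul_dotProduct_mulVec_smul, hsqrt, hroot, mul_div_cancel₀ _ hδ.ne']
  · rw [sum_norm_sq_smul, hsqrt, hv_norm, mul_one]

/-- **Optimality of the bisection solution (paper, Appendix B, Case 3).** Let `A` be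
Hermitian, `R` positive semidefinite, `μ ≥ 0`, `δ > 0`, `ε ≥ 0`, let
`λ = λ_max(A − μR) ≥ 0` (with `λ_max M = ⨆ i, eigenvalues M i`), and let `v` be a
unit-norm eigenvector of `A − μR` for `λ` with `Re (vᴴ R v) = ε/δ`. Then
`f̂ = √δ • v` satisfies `Re (f̂ᴴ R f̂) = ε`, `‖f̂‖² = δ`, `Re (f̂ᴴ A f̂) = δλ + με`, and
maximizes `Re (fᴴ A f)` over all `f` with `Re (fᴴ R f) ≤ ε` and `‖f‖² ≤ δ`. -/
theorem bisection_solution_optimal {N : ℕ} (A R : Matrix (Fin N) (Fin N) ℂ)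
    (hA : A.IsHermitian) (hR : R.PosSemidef) (μ δ ε : ℝ)
    (hμ : 0 ≤ μ) (hδ : 0 < δ) (hε : 0 ≤ ε)
    (hAR : (A - (μ : ℂ) • R).IsHermitian)
    (hlam : 0 ≤ ⨆ i, hAR.eigenvalues i) (v : Fin N → ℂ)
    (hv_eig : (A - (μ : ℂ) • R) *ᵥ v = ((⨆ i, hAR.eigenvalues i : ℝ) : ℂ) • v)
    (hv_norm : ∑ k, Complex.normSq (v k) = 1)
    (hroot : (star v ⬝ᵥ (R *ᵥ v)).re = ε / δ) :
    (star ((Real.sqrt δ : ℂ) • v) ⬝ᵥ (R *ᵥ ((Real.sqrt δ : ℂ) • v))).re = ε ∧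
    (∑ k, Complex.normSq (((Real.sqrt δ : ℂ) • v) k)) = δ ∧
    (star ((Real.sqrt δ : ℂ) • v) ⬝ᵥ (A *ᵥ ((Real.sqrt δ : ℂ) • v))).re =
      δ * (⨆ i, hAR.eigenvalues i) + μ * ε ∧
    (∀ f : Fin N → ℂ, (star f ⬝ᵥ (R *ᵥ f)).re ≤ ε → (∑ k, Complex.normSq (f k)) ≤ δ →
      (star f ⬝ᵥ (A *ᵥ f)).re ≤
        (star ((Real.sqrt δ : ℂ) • v) ⬝ᵥ (A *ᵥ ((Real.sqrt δ : ℂ) • v))).re) := by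
  simp only [Complex.normSq_eq_norm_sq] at hv_norm ⊢
  exact bisection_solution_optimal_general A R μ δ ε hμ hδ hAR hlam v hv_eig hv_norm hroot
end

section
/- (Analytical gradient of the beampattern-matching loss, eq. (31).) Fix matrices A ∈ ℂ^{N×G} and L ∈ ℂ^{N×N}, vectors w ∈ ℂᴺ and q ∈ ℂᴳ, a phase vector φ ∈ ℝᴺ, and an index n. Define b(φ) = Aᵀ · (L · (diag(e^{iφ}) w)) ∈ ℂᴳ (where diag(e^{iφ})w is the vector with k-th entry e^{iφ_k} w_k), the residual r = b(φ) − q, the loss Jloss(φ) = Σ_g |b(φ)_g − q_g|², and the backprojected vector u = Lᴴ · (conj(A) · r) ∈ ℂᴺ (conj(A) entrywise). Then the function t ↦ Jloss(φ[n := t]) (varying only the n-th phase) has derivative at t = φ_n equal to 2 · Im( e^{−iφ_n} · conj(w_n) · u_n ). -/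
/-!
With `M = Aᵀ L`, the loss is the least-squares functional `‖M z - q‖²` evaluated at the
phase-shifted vector `z = diag(e^{iφ}) w`. Along any curve its derivative is
`2 Re ⟨z', Mᴴ (M z - q)⟩`, by moving `M` across the inner product, and
`Mᴴ (M z - q) = Lᴴ (conj(A) r)` is the backprojected residual `u`. When the phases move with
velocity `φ'`, one has `z'_k = φ'_k * i * z_k`, and `Re (conj (i z_k) * u_k) = Im (conj z_k * u_k)`
turns the real part into the imaginary part.
-/

open Matrix

theorem hasDerivAt_mulVec {R 𝔸 ι κ : Type*} [NontriviallyNormedField R] [NormedRing 𝔸]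
    [NormedAlgebra R 𝔸] [Fintype ι] (M : Matrix κ ι 𝔸) {z : R → ι → 𝔸} {z' : ι → 𝔸} {t : R}
    (hz : HasDerivAt z z' t) : HasDerivAt (fun s => M *ᵥ z s) (M *ᵥ z') t :=
  hasDerivAt_pi.2 fun j => HasDerivAt.fun_sum fun k _ => (hasDerivAt_pi.1 hz k).const_mul (M j k)

section LeastSquares

variable {𝕜 ι κ : Type*} [RCLike 𝕜] [Fintype ι] [Fintype κ]

theorem hasDerivAt_sum_norm_sq {f : ℝ → κ → 𝕜} {f' : κ → 𝕜} {t : ℝ} (hf : HasDerivAt f f' t) :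
    HasDerivAt (fun s => ∑ j, ‖f s j‖ ^ 2) (2 * RCLike.re (star f' ⬝ᵥ f t)) t := by
  simp only [dotProduct, map_sum, Finset.mul_sum]
  refine HasDerivAt.fun_sum fun j _ => (hasDerivAt_pi.1 hf j).norm_sq.congr_deriv ?_
  rw [real_inner_comm]
  exact congrArg (fun z => 2 * RCLike.re z) (RCLike.inner_apply' (f' j) (f t j))

theorem hasDerivAt_sum_norm_sq_mulVec_sub (M : Matrix κ ι 𝕜) (q : κ → 𝕜) {z : ℝ → ι → 𝕜}
    {z' : ι → 𝕜} {t : ℝ} (hz : HasDerivAt z z' t) :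
    HasDerivAt (fun s => ∑ j, ‖(M *ᵥ z s - q) j‖ ^ 2)
      (2 * RCLike.re (star z' ⬝ᵥ Mᴴ *ᵥ (M *ᵥ z t - q))) t := by
  rw [dotProduct_mulVec, ← star_mulVec]
  exact hasDerivAt_sum_norm_sq ((hasDerivAt_mulVec M hz).sub_const q)

end LeastSquares

/-- The vector `diag(e^{iφ}) w` leaving a layer with phase shifts `φ` when `w` enters it, written
entrywise to avoid the diagonal matrix. -/
noncomputable def phaseShift {ι : Type*} (φ : ι → ℝ) (w : ι → ℂ) : ι → ℂ :=
  fun k => Complex.exp (Complex.I * φ k) * w k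

theorem star_phaseShift_apply {ι : Type*} (φ : ι → ℝ) (w : ι → ℂ) (k : ι) :
    star (phaseShift φ w k) = Complex.exp (-(Complex.I * φ k)) * star (w k) := by
  simp [phaseShift, ← Complex.exp_conj]

theorem hasDerivAt_phaseShift {ι : Type*} {φ : ℝ → ι → ℝ} {φ' : ι → ℝ} {t : ℝ}
    (hφ : HasDerivAt φ φ' t) (w : ι → ℂ) :
    HasDerivAt (fun s => phaseShift (φ s) w)
      (fun k => φ' k * (Complex.I * phaseShift (φ t) w k)) t := by
  refine hasDerivAt_pi.2 fun k => ?_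
  refine (((hasDerivAt_pi.1 hφ k).ofReal_comp.const_mul Complex.I).cexp.mul_const
    (w k)).congr_deriv ?_
  simp only [phaseShift]
  ring

theorem loss_phase_derivative_general {ι κ γ : Type*} [Fintype ι] [Fintype κ] [Fintype γ]
    (A : Matrix κ γ ℂ) (L : Matrix κ ι ℂ) (w : ι → ℂ) (q : γ → ℂ) {φ : ℝ → ι → ℝ}
    {φ' : ι → ℝ} {t : ℝ} (hφ : HasDerivAt φ φ' t) :
    HasDerivAt (fun s => ∑ g, Complex.normSq ((Aᵀ *ᵥ (L *ᵥ phaseShift (φ s) w) - q) g))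
      (∑ k, φ' k * (2 * (Complex.exp (-(Complex.I * φ t k)) * star (w k) *
        (Lᴴ *ᵥ (A.map star *ᵥ (Aᵀ *ᵥ (L *ᵥ phaseShift (φ t) w) - q))) k).im)) t := by
  simp only [Complex.normSq_eq_norm_sq, ← transpose_conjTranspose, mulVec_mulVec,
    ← conjTranspose_mul, ← star_phaseShift_apply]
  refine (hasDerivAt_sum_norm_sq_mulVec_sub (Aᵀ * L) q
    (hasDerivAt_phaseShift hφ w)).congr_deriv ?_
  simp only [dotProduct, map_sum, Finset.mul_sum]
  refine Finset.sum_congr rfl fun k _ => ?_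
  have hre (x : ℝ) (z u : ℂ) : (star (x * (Complex.I * z)) * u).re = x * (star z * u).im := by
    simp only [star_mul', RCLike.star_def, Complex.conj_ofReal, Complex.conj_I, mul_assoc,
      Complex.re_ofReal_mul, neg_mul, Complex.neg_re, Complex.I_mul_re, neg_neg]
  rw [Pi.star_apply, RCLike.re_eq_complex_re, hre]
  ring

/-- **Per-element gradient of the beampattern-matching loss (paper, eqs. (29)–(31)).**
With `b(φ) = Aᵀ (L (diag(e^{iφ}) w))`, residual `r = b(φ) − q`, loss
`J(φ) = Σ_g |b(φ)_g − q_g|²`, and backprojected vector `u = Lᴴ (conj(A) r)`, the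
derivative of the loss in the single phase `φ_n` equals
`2 Im (e^{−iφ_n} conj(w_n) u_n)`. -/
theorem loss_phase_derivative {N G : ℕ} (A : Matrix (Fin N) (Fin G) ℂ)
    (L : Matrix (Fin N) (Fin N) ℂ) (w : Fin N → ℂ) (q : Fin G → ℂ)
    (φ : Fin N → ℝ) (n : Fin N) :
    HasDerivAt
      (fun t : ℝ => ∑ g, Complex.normSq
        ((Aᵀ *ᵥ (L *ᵥ fun k => Complex.exp (Complex.I * (Function.update φ n t k)) * w k)) g
          - q g))
      (2 * (Complex.exp (-(Complex.I * (φ n))) * (starRingEnd ℂ) (w n) *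
        (Lᴴ *ᵥ (A.map (starRingEnd ℂ) *ᵥ fun g =>
          (Aᵀ *ᵥ (L *ᵥ fun k => Complex.exp (Complex.I * (φ k)) * w k)) g - q g)) n).im)
      (φ n) := by
  refine (loss_phase_derivative_general A L w q (hasDerivAt_update φ n (φ n))).congr_deriv ?_
  simp only [Function.update_eq_self, Pi.single_apply, ite_mul, one_mul, zero_mul,
    Finset.sum_ite_eq', Finset.mem_univ, if_true]
  rfl
end
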